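/- Let μ be a nonzero σ-finite atomless measure. Then L¹(μ) has the Daugavet property: every rank-one bounded linear operator T : L¹(μ) → L¹(μ) (i.e. T of the form T(x) = φ(x)·h for some bounded linear functional φ on L¹(μ) and some h ∈ L¹(μ)) satisfies ‖Id + T‖ = 1 + ‖T‖. -/

import Mathlib

/-!
The lower bound `1 + ‖φ‖ ‖h‖ ≤ ‖Id + φ ⊗ h‖` needs almost norming vectors `f` of `φ` that live on
a set `B` carrying hardly any of the mass of `h`: then `f` and `φ(f) • h` are almost disjointly
supported, so the norm of their sum is almost `‖f‖ + ‖φ(f)‖ ‖h‖`.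

Such an `f` is cut out of an arbitrary almost norming `g`. The finite measure `ν = |h| μ` is
atomless because `μ` is, hence `α` is a finite union of disjoint sets with `ν`-measure at most `δ`.
Both `B ↦ g 1_B` and `B ↦ ‖g 1_B‖` are additive, so if `‖φ(g)‖ > c ‖g‖`, then
`‖φ(g 1_B)‖ > c ‖g 1_B‖` for at least one piece `B` of the partition. The partition is obtained in
the form of an induction principle (`of_small_of_union`), by exhaustion. Neither the duality
between `L¹` and `L^∞` nor the intermediate value theorem for atomless measures is needed.
-/

open MeasureTheory

/-- An atom of a measure `μ`: a measurable set `A` with `0 < μ A < ∞` such that every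
measurable subset `B ⊆ A` satisfies `μ B = 0` or `μ B = μ A`. -/
def IsMeasureAtom {α : Type*} [MeasurableSpace α] (μ : Measure α) (A : Set α) : Prop :=
  MeasurableSet A ∧ 0 < μ A ∧ μ A < ⊤ ∧
    ∀ B, B ⊆ A → MeasurableSet B → μ B = 0 ∨ μ B = μ A

open scoped ENNReal

namespace L1Daugavet

variable {α : Type*} [MeasurableSpace α]

/-- A measure `f μ` with a density with respect to an atomless `μ` is divisible: each of its nonnull
sets has a nonnull subset of at most half the measure. -/
lemma exists_half {μ : Measure α} [SigmaFinite μ] (hμ : ∀ A : Set α, ¬ IsMeasureAtom μ A)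
    {f : α → ℝ≥0∞} (hf : Measurable f) {A : Set α} (hA : MeasurableSet A)
    (hpos : μ.withDensity f A ≠ 0) :
    ∃ B, B ⊆ A ∧ MeasurableSet B ∧ μ.withDensity f B ≠ 0 ∧
      μ.withDensity f B ≤ μ.withDensity f A / 2 := by
  have hsupp : MeasurableSet ({x | f x ≠ 0} ∩ A) :=
    (hf (measurableSet_singleton 0).compl).inter hA
  have hpos' : 0 < μ ({x | f x ≠ 0} ∩ A) := by
    rw [pos_iff_ne_zero]
    intro h0
    exact hpos ((withDensity_apply_eq_zero hf).2 h0)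
  obtain ⟨t, ht, hts, ht0, httop⟩ := Measure.exists_subset_measure_lt_top hsupp hpos'
  have hnull : ∀ C, C ⊆ t → μ C ≠ 0 → μ.withDensity f C ≠ 0 := by
    intro C hC h0 h1
    rw [withDensity_apply_eq_zero hf] at h1
    refine h0 (measure_mono_null (fun x hx => ?_) h1)
    exact ⟨(hts (hC hx)).1, hx⟩
  have hna := hμ t
  simp only [IsMeasureAtom, not_and, not_forall, not_or] at hna
  obtain ⟨B, hBt, hB, hB0, hB1⟩ := hna ht ht0 httop
  have hBA : B ⊆ A := fun x hx => (hts (hBt hx)).2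
  have hdiff : μ (t \ B) ≠ 0 := by
    intro h0
    exact hB1 (measure_eq_measure_of_null_sdiff hBt h0)
  have hsum : μ.withDensity f B + μ.withDensity f (A \ B) = μ.withDensity f A := by
    have := measure_inter_add_sdiff (μ := μ.withDensity f) A hB
    rwa [Set.inter_eq_self_of_subset_right hBA] at this
  by_cases hle : μ.withDensity f B ≤ μ.withDensity f A / 2
  · exact ⟨B, hBA, hB, hnull B hBt hB0, hle⟩
  · refine ⟨A \ B, Set.sdiff_subset, hA.diff hB, ?_, ?_⟩
    · intro h0
      refine hnull (t \ B) Set.sdiff_subset hdiff (measure_mono_null ?_ h0)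
      exact Set.sdiff_subset_sdiff_left fun x hx => (hts hx).2
    · by_contra hgt
      have := ENNReal.add_lt_add (not_le.1 hle) (not_le.1 hgt)
      rw [hsum, ENNReal.add_halves] at this
      exact lt_irrefl _ this

lemma exists_small {ν : Measure α} [IsFiniteMeasure ν]
    (hν : ∀ A, MeasurableSet A → ν A ≠ 0 →
      ∃ B, B ⊆ A ∧ MeasurableSet B ∧ ν B ≠ 0 ∧ ν B ≤ ν A / 2)
    {δ : ℝ≥0∞} (hδ : δ ≠ 0) {A : Set α} (hA : MeasurableSet A) (hpos : ν A ≠ 0) :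
    ∃ B, B ⊆ A ∧ MeasurableSet B ∧ ν B ≠ 0 ∧ ν B ≤ δ := by
  have key : ∀ n : ℕ, ∃ B, B ⊆ A ∧ MeasurableSet B ∧ ν B ≠ 0 ∧ ν B ≤ ν A * (2⁻¹) ^ n := by
    intro n
    induction n with
    | zero => exact ⟨A, subset_rfl, hA, hpos, by simp⟩
    | succ n ih =>
      obtain ⟨B, hBA, hB, hB0, hBn⟩ := ih
      obtain ⟨C, hCB, hC, hC0, hCn⟩ := hν B hB hB0
      refine ⟨C, hCB.trans hBA, hC, hC0, hCn.trans ?_⟩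
      rw [pow_succ, ← mul_assoc, ENNReal.div_eq_inv_mul, mul_comm]
      gcongr
  have hlim : Filter.Tendsto (fun n : ℕ => ν A * (2⁻¹ : ℝ≥0∞) ^ n) Filter.atTop (nhds 0) := by
    have h2 : (2⁻¹ : ℝ≥0∞) < 1 := ENNReal.inv_lt_one.2 (by norm_num)
    have := ENNReal.Tendsto.const_mul (a := ν A)
      (ENNReal.tendsto_pow_atTop_nhds_zero_of_lt_one h2) (Or.inr (measure_ne_top ν A))
    simpa using this
  obtain ⟨n, hn⟩ := (hlim.eventually_lt_const (pos_iff_ne_zero.2 hδ)).exists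
  obtain ⟨B, h1, h2, h3, h4⟩ := key n
  exact ⟨B, h1, h2, h3, h4.trans hn.le⟩

/-- A finite atomless measure space is a finite disjoint union of sets of measure at most `δ`,
stated as an induction principle: a property of such sets that is inherited by disjoint unions
holds for the whole space. -/
lemma of_small_of_union {ν : Measure α} [IsFiniteMeasure ν]
    (hν : ∀ A, MeasurableSet A → ν A ≠ 0 →
      ∃ B, B ⊆ A ∧ MeasurableSet B ∧ ν B ≠ 0 ∧ ν B ≤ ν A / 2)
    {δ : ℝ≥0∞} (hδ : δ ≠ 0) (P : Set α → Prop)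
    (hsmall : ∀ B, MeasurableSet B → ν B ≤ δ → P B)
    (hunion : ∀ A B, MeasurableSet A → MeasurableSet B → Disjoint A B → P A → P B → P (A ∪ B)) :
    P Set.univ := by
  -- The hereditary version of `P` is stable under arbitrary finite unions.
  let G : Set (Set α) := {A | MeasurableSet A ∧ ∀ B, B ⊆ A → MeasurableSet B → P B}
  have hGsmall : ∀ A, MeasurableSet A → ν A ≤ δ → A ∈ G := fun A hA h =>
    ⟨hA, fun B hBA hB => hsmall B hB ((measure_mono hBA).trans h)⟩
  have hGunion : ∀ A B, A ∈ G → B ∈ G → A ∪ B ∈ G := by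
    rintro A B ⟨hA, hA'⟩ ⟨hB, hB'⟩
    refine ⟨hA.union hB, fun C hC hCm => ?_⟩
    rw [← Set.inter_union_sdiff C A]
    refine hunion _ _ (hCm.inter hA) (hCm.diff hA) Set.disjoint_sdiff_inter.symm
      (hA' _ Set.inter_subset_right (hCm.inter hA)) (hB' _ ?_ (hCm.diff hA))
    rintro x ⟨hx, hxA⟩
    exact (hC hx).resolve_left hxA
  -- `U` is a countable union of members of `G` of the largest possible measure.
  have hne : (ν '' G).Nonempty := ⟨_, ∅, hGsmall ∅ .empty (by simp), rfl⟩
  obtain ⟨u, -, hu, huG⟩ := exists_seq_tendsto_sSup hne (OrderTop.bddAbove _)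
  choose A hAG hAu using huG
  have hacc : ∀ n, Set.accumulate A n ∈ G := by
    intro n
    induction n with
    | zero => simpa using hAG 0
    | succ n ih =>
      rw [Set.accumulate_succ]
      exact hGunion _ _ ih (hAG _)
  set U := ⋃ n, A n with hU
  have hUm : MeasurableSet U := .iUnion fun n => (hAG n).1
  have hUsup : sSup (ν '' G) ≤ ν U :=
    le_of_tendsto' hu fun n => by
      rw [← hAu n]; exact measure_mono (Set.subset_iUnion A n)
  -- All but a small part of `U` is exhausted after finitely many steps.
  have hUG : U ∈ G := by
    have hlim : Filter.Tendsto (fun n => ν (U \ Set.accumulate A n)) Filter.atTop (nhds 0) := by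
      have h1 : ⋂ n, (U \ Set.accumulate A n) = ∅ := by
        rw [← Set.sdiff_iUnion, Set.iUnion_accumulate, ← hU, Set.sdiff_self]
      have h2 := tendsto_measure_iInter_atTop (μ := ν) (s := fun n => U \ Set.accumulate A n)
        (fun n => (hUm.diff (hacc n).1).nullMeasurableSet)
        (fun i j hij => Set.sdiff_subset_sdiff_right (Set.monotone_accumulate hij))
        ⟨0, measure_ne_top _ _⟩
      rwa [h1, measure_empty] at h2
    obtain ⟨n, hn⟩ := (hlim.eventually_lt_const (pos_iff_ne_zero.2 hδ)).exists
    have hsub : Set.accumulate A n ⊆ U := by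
      rw [hU, ← Set.iUnion_accumulate]; exact Set.subset_iUnion (Set.accumulate A) n
    rw [← Set.union_sdiff_cancel hsub]
    exact hGunion _ _ (hacc n) (hGsmall _ (hUm.diff (hacc n).1) hn.le)
  have hcompl : ν Uᶜ = 0 := by
    by_contra h0
    obtain ⟨B, hBU, hB, hB0, hBδ⟩ := exists_small hν hδ hUm.compl h0
    have h1 : ν (U ∪ B) ≤ ν U :=
      (le_sSup (Set.mem_image_of_mem ν (hGunion _ _ hUG (hGsmall B hB hBδ)))).trans hUsup
    rw [measure_union (Set.disjoint_right.2 fun x hx => hBU hx) hB] at h1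
    exact h1.not_gt (ENNReal.lt_add_right (measure_ne_top _ _) hB0)
  have huniv := hGunion _ _ hUG (hGsmall Uᶜ hUm.compl (by simp [hcompl]))
  rw [Set.union_compl_self] at huniv
  exact huniv.2 _ subset_rfl .univ

open Classical in
/-- The function `g 1_B` in `L¹(μ)`. The value is `0` when `B` is not measurable. -/
noncomputable def cut {μ : Measure α} (B : Set α) (g : Lp ℂ 1 μ) : Lp ℂ 1 μ :=
  if hB : MeasurableSet B then ((Lp.memLp g).indicator hB).toLp _ else 0

lemma coeFn_cut {μ : Measure α} {B : Set α} (hB : MeasurableSet B) (g : Lp ℂ 1 μ) :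
    cut B g =ᵐ[μ] B.indicator g := by
  rw [cut, dif_pos hB]
  exact MemLp.coeFn_toLp _

lemma norm_cut {μ : Measure α} {B : Set α} (hB : MeasurableSet B) (g : Lp ℂ 1 μ) :
    ‖cut B g‖ = ∫ x in B, ‖g x‖ ∂μ := by
  rw [L1.norm_eq_integral_norm, ← integral_indicator hB]
  refine integral_congr_ae ?_
  filter_upwards [coeFn_cut hB g] with x hx
  rw [hx, norm_indicator_eq_indicator_norm]

lemma cut_univ {μ : Measure α} (g : Lp ℂ 1 μ) : cut Set.univ g = g := by
  apply Lp.ext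
  filter_upwards [coeFn_cut .univ g] with x hx
  simp [hx]

lemma cut_union {μ : Measure α} {A B : Set α} (hA : MeasurableSet A) (hB : MeasurableSet B)
    (hAB : Disjoint A B) (g : Lp ℂ 1 μ) : cut (A ∪ B) g = cut A g + cut B g := by
  apply Lp.ext
  filter_upwards [coeFn_cut hA g, coeFn_cut hB g, coeFn_cut (hA.union hB) g,
    Lp.coeFn_add (cut A g) (cut B g)] with x h1 h2 h3 h4
  rw [h3, h4, Pi.add_apply, h1, h2, Set.indicator_union_of_disjoint hAB]

lemma norm_cut_union {μ : Measure α} {A B : Set α} (hA : MeasurableSet A) (hB : MeasurableSet B)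
    (hAB : Disjoint A B) (g : Lp ℂ 1 μ) : ‖cut (A ∪ B) g‖ = ‖cut A g‖ + ‖cut B g‖ := by
  rw [norm_cut hA, norm_cut hB, norm_cut (hA.union hB)]
  exact setIntegral_union hAB hB (L1.integrable_coeFn g).norm.integrableOn
    (L1.integrable_coeFn g).norm.integrableOn

/-- If `h` has little mass on `B`, then adding a multiple of `h` to a function supported in `B`
almost adds the norms. -/
lemma norm_cut_add_smul {μ : Measure α} {B : Set α} (hB : MeasurableSet B) (g h : Lp ℂ 1 μ)
    (a : ℂ) : ‖cut B g‖ + ‖a‖ * ‖h‖ - 2 * ‖a‖ * ‖cut B h‖ ≤ ‖cut B g + a • h‖ := by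
  have hh : h = cut B h + cut Bᶜ h := by
    rw [← cut_union hB hB.compl disjoint_compl_right, Set.union_compl_self, cut_univ]
  have hn : ‖h‖ = ‖cut B h‖ + ‖cut Bᶜ h‖ := by
    rw [← norm_cut_union hB hB.compl disjoint_compl_right, Set.union_compl_self, cut_univ]
  have hdisj : ‖cut B g + a • cut Bᶜ h‖ = ‖cut B g‖ + ‖a‖ * ‖cut Bᶜ h‖ := by
    rw [← norm_smul]
    simp only [L1.norm_eq_integral_norm]
    rw [← integral_add (L1.integrable_coeFn _).norm (L1.integrable_coeFn _).norm]
    refine integral_congr_ae ?_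
    filter_upwards [coeFn_cut hB g, coeFn_cut hB.compl h, Lp.coeFn_smul a (cut Bᶜ h),
      Lp.coeFn_add (cut B g) (a • cut Bᶜ h)] with x h1 h2 h3 h4
    rw [h4, Pi.add_apply, h3, Pi.smul_apply, h1, h2]
    by_cases hx : x ∈ B <;> simp [hx]
  have htri : ‖cut B g + a • cut Bᶜ h‖ ≤ ‖cut B g + a • h‖ + ‖a‖ * ‖cut B h‖ := by
    rw [← norm_smul]
    have : cut B g + a • cut Bᶜ h = (cut B g + a • h) - a • cut B h := by
      have ha : a • h = a • cut B h + a • cut Bᶜ h := by rw [← smul_add, ← hh]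
      rw [ha]
      abel
    rw [this]
    exact norm_sub_le _ _
  rw [hn]
  linarith

/-- Almost norming vectors of `φ` can be localized where `h` has little mass. -/
lemma exists_cut {μ : Measure α} [SigmaFinite μ] (hμ : ∀ A : Set α, ¬ IsMeasureAtom μ A)
    (φ : Lp ℂ 1 μ →L[ℂ] ℂ) (g h : Lp ℂ 1 μ) {c δ : ℝ} (hg : c * ‖g‖ < ‖φ g‖) (hδ : 0 < δ) :
    ∃ B, MeasurableSet B ∧ ‖cut B h‖ ≤ δ ∧ c * ‖cut B g‖ < ‖φ (cut B g)‖ := by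
  by_contra! hcon
  have hmeas : Measurable fun x => ‖h x‖ₑ := (Lp.stronglyMeasurable h).enorm
  have : IsFiniteMeasure (μ.withDensity fun x => ‖h x‖ₑ) :=
    isFiniteMeasure_withDensity (L1.integrable_coeFn h).hasFiniteIntegral.ne
  have key := of_small_of_union (ν := μ.withDensity fun x => ‖h x‖ₑ)
    (fun A hA hpos => exists_half hμ hmeas hA hpos) (δ := ENNReal.ofReal δ) (by simpa using hδ)
    (fun B => ‖φ (cut B g)‖ ≤ c * ‖cut B g‖)
    (fun B hB hle => hcon B hB (by
      rw [withDensity_apply _ hB] at hle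
      rw [norm_cut hB, integral_norm_eq_lintegral_enorm
        (L1.integrable_coeFn h).integrableOn.aestronglyMeasurable]
      exact ENNReal.toReal_le_of_le_ofReal hδ.le hle))
    (fun A B hA hB hAB h1 h2 => by
      rw [norm_cut_union hA hB hAB, cut_union hA hB hAB, map_add, mul_add]
      exact (norm_add_le _ _).trans (add_le_add h1 h2))
  rw [cut_univ] at key
  exact key.not_gt hg

lemma nontrivial_Lp {μ : Measure α} [SigmaFinite μ] (hμ0 : μ ≠ 0) : Nontrivial (Lp ℂ 1 μ) := by
  obtain ⟨t, ht, -, ht0, httop⟩ := Measure.exists_subset_measure_lt_top (μ := μ) .univ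
    (pos_iff_ne_zero.2 (Measure.measure_univ_ne_zero.2 hμ0))
  refine ⟨indicatorConstLp 1 ht httop.ne (1 : ℂ), 0, fun h0 => ?_⟩
  have := norm_indicatorConstLp (p := 1) (hs := ht) (hμs := httop.ne) (c := (1 : ℂ))
    one_ne_zero ENNReal.one_ne_top
  rw [h0] at this
  simp only [norm_zero, norm_one, one_mul, ENNReal.toReal_one, div_one, Real.rpow_one] at this
  exact (ENNReal.toReal_pos ht0.ne' httop.ne).ne this

end L1Daugavet

open L1Daugavet in
/-- For a nonzero σ-finite atomless measure `μ`, the space `L¹(μ)` has the Daugavet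
property: every rank-one bounded linear operator `T x = φ(x) • h` satisfies
`‖Id + T‖ = 1 + ‖T‖`. -/
theorem L1_daugavet_property {α : Type*} [MeasurableSpace α] (μ : Measure α)
    [SigmaFinite μ] (hμ0 : μ ≠ 0) (hμ : ∀ A : Set α, ¬ IsMeasureAtom μ A)
    (φ : Lp ℂ 1 μ →L[ℂ] ℂ) (h : Lp ℂ 1 μ) :
    ‖ContinuousLinearMap.id ℂ (Lp ℂ 1 μ) + φ.smulRight h‖ = 1 + ‖φ.smulRight h‖ := by
  have := nontrivial_Lp hμ0
  rcases eq_or_ne φ 0 with rfl | hφ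
  · have h0 : (0 : Lp ℂ 1 μ →L[ℂ] ℂ).smulRight h = 0 := by ext1 x; simp
    rw [h0, add_zero, norm_zero, add_zero]
    exact ContinuousLinearMap.norm_id
  refine le_antisymm ((norm_add_le _ _).trans (by gcongr; exact ContinuousLinearMap.norm_id_le)) ?_
  set K := ‖ContinuousLinearMap.id ℂ (Lp ℂ 1 μ) + φ.smulRight h‖ with hK
  rw [ContinuousLinearMap.norm_smulRight_apply]
  have key : ∀ c, 0 ≤ c → c < ‖φ‖ → ∀ δ, 0 < δ → 1 + c * ‖h‖ - 2 * ‖φ‖ * δ ≤ K := by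
    intro c hc hcφ δ hδ
    obtain ⟨g, hg⟩ : ∃ g, c * ‖g‖ < ‖φ g‖ := by
      by_contra! hcon
      exact hcφ.not_ge (φ.opNorm_le_bound hc hcon)
    obtain ⟨B, hB, hBh, hBg⟩ := exists_cut hμ φ g h hg hδ
    set f := cut B g with hf
    have hfpos : 0 < ‖f‖ := by
      rw [norm_pos_iff]
      intro h0
      simp [h0] at hBg
    have hlow := norm_cut_add_smul hB g h (φ f)
    have hup : ‖f + φ f • h‖ ≤ K * ‖f‖ :=
      (ContinuousLinearMap.id ℂ (Lp ℂ 1 μ) + φ.smulRight h).le_opNorm f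
    have h1 : c * ‖f‖ * ‖h‖ ≤ ‖φ f‖ * ‖h‖ := by gcongr
    have h2 : ‖φ f‖ * ‖cut B h‖ ≤ (‖φ‖ * ‖f‖) * δ := by
      gcongr
      exact φ.le_opNorm f
    refine le_of_mul_le_mul_right ?_ hfpos
    rw [← hf] at hlow
    nlinarith
  have hδ : ∀ c, 0 ≤ c → c < ‖φ‖ → 1 + c * ‖h‖ ≤ K := by
    intro c hc hcφ
    have hpos : 0 < ‖φ‖ := norm_pos_iff.2 hφ
    refine le_of_forall_pos_le_add fun ε hε => ?_
    have := key c hc hcφ (ε / (2 * ‖φ‖)) (by positivity)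
    rw [mul_div_cancel₀ _ (by positivity)] at this
    linarith
  have hlim : Filter.Tendsto (fun c : ℝ => 1 + c * ‖h‖) (nhdsWithin ‖φ‖ (Set.Iio ‖φ‖))
      (nhds (1 + ‖φ‖ * ‖h‖)) :=
    (Continuous.tendsto (by fun_prop) _).mono_left nhdsWithin_le_nhds
  refine le_of_tendsto hlim ?_
  filter_upwards [Ioo_mem_nhdsLT (norm_pos_iff.2 hφ)] with c hc
  exact hδ c hc.1.le hc.2
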